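/- arXiv:1610.05969 — 5 statements merged into one kernel-verified Lean document; each statement's English description precedes it below -/
import Mathlib

section
/- Diagonal expansion of the rescaled kernel: for every integer N ≥ 2 and all real x, writing x_N = √N · x, one has L^N(x,x) = (√N/2) · { ψ_{N-1}(x_N)² + ψ_N(x_N)² − √(1 − 1/N) · ψ_{N-2}(x_N) ψ_N(x_N) − √(1 + 1/N) · ψ_{N-1}(x_N) ψ_{N+1}(x_N) }. -/
open Real MeasureTheory Filter Set

/-- Physicists' Hermite polynomial `H_n(x) = (-1)^n e^{x^2} (d/dx)^n e^{-x^2}`. -/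
noncomputable def hermiteP (n : ℕ) (x : ℝ) : ℝ :=
  (-1 : ℝ) ^ n * Real.exp (x ^ 2) * iteratedDeriv n (fun t => Real.exp (-t ^ 2)) x

/-- Oscillator wave function `ψ_n(x) = (√π 2^n n!)^{-1/2} e^{-x^2/2} H_n(x)`. -/
noncomputable def osc (n : ℕ) (x : ℝ) : ℝ :=
  (Real.sqrt (Real.sqrt Real.pi * 2 ^ n * (n.factorial : ℝ)))⁻¹ *
    Real.exp (-x ^ 2 / 2) * hermiteP n x

/-- The kernel `K^N(x,y) = Σ_{k=0}^{N-1} ψ_k(x) ψ_k(y)`. -/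
noncomputable def kerK (N : ℕ) (x y : ℝ) : ℝ :=
  ∑ k ∈ Finset.range N, osc k x * osc k y

/-- The rescaled kernel `L^N(x,y) = N^{-1/2} K^N(√N x, √N y)`. -/
noncomputable def kerL (N : ℕ) (x y : ℝ) : ℝ :=
  (Real.sqrt (N : ℝ))⁻¹ * kerK N (Real.sqrt (N : ℝ) * x) (Real.sqrt (N : ℝ) * y)

lemma gauss_rec (n : ℕ) : ∀ x : ℝ, iteratedDeriv (n + 2) (fun t : ℝ => Real.exp (-t ^ 2)) x =
    -2 * x * iteratedDeriv (n + 1) (fun t : ℝ => Real.exp (-t ^ 2)) x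
      - 2 * (n + 1) * iteratedDeriv n (fun t : ℝ => Real.exp (-t ^ 2)) x := by
  have hf : ContDiff ℝ (⊤ : ℕ∞) (fun t : ℝ => Real.exp (-t ^ 2)) := by fun_prop
  have hd : ∀ m (x : ℝ), HasDerivAt (iteratedDeriv m (fun t : ℝ => Real.exp (-t ^ 2)))
      (iteratedDeriv (m + 1) (fun t : ℝ => Real.exp (-t ^ 2)) x) x := by
    intro m x
    rw [iteratedDeriv_succ]
    exact ((hf.differentiable_iteratedDeriv m (by exact_mod_cast WithTop.coe_lt_top m)) x).hasDerivAt
  have h1 : iteratedDeriv 1 (fun t : ℝ => Real.exp (-t ^ 2)) =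
      fun x => -2 * x * iteratedDeriv 0 (fun t : ℝ => Real.exp (-t ^ 2)) x := by
    funext x
    rw [iteratedDeriv_one, iteratedDeriv_zero]
    have := (((hasDerivAt_id x).pow 2).neg).exp
    refine (HasDerivAt.deriv (f' := _) this).trans ?_
    simp
    ring
  induction n with
  | zero =>
    intro x
    have h := hd 1 x
    rw [h1] at h
    have h2 := (((hasDerivAt_id x).const_mul (-2)).mul (hd 0 x))
    have := h.unique h2
    simp only [id, zero_add] at this ⊢
    rw [this]; push_cast; ring
  | succ n ih =>
    intro x
    have h := hd (n + 2) x
    rw [funext ih] at h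
    have h2 := (((hasDerivAt_id x).const_mul (-2)).mul (hd (n + 1) x)).sub
      ((hd n x).const_mul (2 * ((n : ℝ) + 1)))
    have := h.unique h2
    simp only [id] at this
    rw [show n + 1 + 2 = n + 2 + 1 from rfl, this]; push_cast; ring

lemma hermiteP_rec (n : ℕ) (x : ℝ) : hermiteP (n + 2) x =
    2 * x * hermiteP (n + 1) x - 2 * (n + 1) * hermiteP n x := by
  unfold hermiteP
  rw [gauss_rec n x]
  ring

lemma hermiteP_one (x : ℝ) : hermiteP 1 x = 2 * x * hermiteP 0 x := by
  unfold hermiteP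
  rw [iteratedDeriv_one, iteratedDeriv_zero]
  have := (((hasDerivAt_id x).pow 2).neg).exp
  have h : deriv (fun t : ℝ => Real.exp (-t ^ 2)) x = Real.exp (-x ^ 2) * (-2 * x) := by
    refine (HasDerivAt.deriv (f' := _) this).trans ?_
    simp
  rw [h]
  ring

lemma norm_succ (n : ℕ) :
    (Real.sqrt (Real.sqrt Real.pi * 2 ^ (n + 1) * ((n + 1).factorial : ℝ)))⁻¹ =
    (Real.sqrt (Real.sqrt Real.pi * 2 ^ n * (n.factorial : ℝ)))⁻¹ *
      ((√2)⁻¹ * (√((n : ℝ) + 1))⁻¹) := by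
  rw [← mul_inv, ← mul_inv, ← Real.sqrt_mul (by norm_num), ← Real.sqrt_mul (by positivity)]
  congr 2
  rw [Nat.factorial_succ]; push_cast; ring

lemma osc_one (x : ℝ) : osc 1 x = √2 * x * osc 0 x := by
  have h := norm_succ 0
  rw [zero_add] at h
  have h2 : √2 * √2 = (2 : ℝ) := Real.mul_self_sqrt (by norm_num)
  have h0 : √2 ≠ (0 : ℝ) := by positivity
  have h3 : (√2)⁻¹ * 2 = √2 := by field_simp; linarith
  unfold osc
  rw [h, hermiteP_one]
  simp only [Nat.cast_zero, zero_add, Real.sqrt_one, inv_one, mul_one]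
  generalize (√(√π * 2 ^ 0 * ((Nat.factorial 0 : ℕ) : ℝ)))⁻¹ = c
  linear_combination c * rexp (-x ^ 2 / 2) * x * hermiteP 0 x * h3

lemma osc_rec (n : ℕ) (x : ℝ) :
    √((n : ℝ) + 2) * osc (n + 2) x = √2 * x * osc (n + 1) x - √((n : ℝ) + 1) * osc n x := by
  have h := norm_succ n
  have h' := norm_succ (n + 1)
  have e : ((n + 1 : ℕ) : ℝ) + 1 = n + 2 := by push_cast; ring
  rw [e] at h'
  unfold osc
  rw [show n + 2 = n + 1 + 1 from rfl, h', h, show n + 1 + 1 = n + 2 from rfl, hermiteP_rec]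
  generalize (√(√π * 2 ^ n * ((Nat.factorial n : ℕ) : ℝ)))⁻¹ = c
  have h2 : √2 ^ 2 = (2 : ℝ) := Real.sq_sqrt (by norm_num)
  have h3 : √((n : ℝ) + 1) ^ 2 = (n : ℝ) + 1 := Real.sq_sqrt (by positivity)
  have p0 : √2 ≠ (0 : ℝ) := by positivity
  have p2 : √((n : ℝ) + 2) ≠ 0 := by positivity
  generalize √((n : ℝ) + 1) = s at *
  have p1 : s ≠ 0 := by
    rintro rfl
    have : (0 : ℝ) < n + 1 := by positivity
    simp at h3; linarith
  generalize √((n : ℝ) + 2) = u at *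
  generalize √(2 : ℝ) = r at *
  rw [← h3, ← h2]
  field_simp
  try ring

lemma kerK_diag (n : ℕ) (y : ℝ) : kerK (n + 1) y y =
    ((n : ℝ) + 1) * (osc n y ^ 2 + osc (n + 1) y ^ 2)
      - √((n : ℝ) + 1) * (√2 * y) * osc n y * osc (n + 1) y := by
  induction n with
  | zero =>
    simp only [kerK, zero_add, Finset.sum_range_one, osc_one]
    simp
    ring
  | succ n ih =>
    have hs : kerK (n + 1 + 1) y y = kerK (n + 1) y y + osc (n + 1) y * osc (n + 1) y := by
      unfold kerK; rw [Finset.sum_range_succ]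
    rw [hs, ih]
    have h := osc_rec n y
    have e : ((n + 1 : ℕ) : ℝ) + 1 = n + 2 := by push_cast; ring
    rw [e]
    have h3 : √((n : ℝ) + 1) ^ 2 = (n : ℝ) + 1 := Real.sq_sqrt (by positivity)
    have h4 : √((n : ℝ) + 2) ^ 2 = (n : ℝ) + 2 := Real.sq_sqrt (by positivity)
    rw [show n + 1 + 1 = n + 2 from rfl]
    generalize √((n : ℝ) + 1) = s at *
    generalize √((n : ℝ) + 2) = u at *
    generalize osc n y = a at *
    generalize osc (n + 1) y = b at *
    generalize osc (n + 2) y = c at *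
    linear_combination (-(u * c) + s * a) * h - a ^ 2 * h3 + c ^ 2 * h4

/-- Diagonal expansion of the rescaled kernel. -/
theorem diagonal_expansion (N : ℕ) (hN : 2 ≤ N) (x : ℝ) :
    kerL N x x =
      (Real.sqrt (N : ℝ) / 2) *
        (osc (N - 1) (Real.sqrt (N : ℝ) * x) ^ 2 + osc N (Real.sqrt (N : ℝ) * x) ^ 2 -
          Real.sqrt (1 - 1 / (N : ℝ)) *
            osc (N - 2) (Real.sqrt (N : ℝ) * x) * osc N (Real.sqrt (N : ℝ) * x) -
          Real.sqrt (1 + 1 / (N : ℝ)) *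
            osc (N - 1) (Real.sqrt (N : ℝ) * x) * osc (N + 1) (Real.sqrt (N : ℝ) * x)) := by
  obtain ⟨n, rfl⟩ : ∃ n, N = n + 2 := ⟨N - 2, by omega⟩
  have hc : ((n + 2 : ℕ) : ℝ) = (n : ℝ) + 2 := by push_cast; ring
  rw [show n + 2 - 1 = n + 1 by omega, show n + 2 - 2 = n by omega]
  unfold kerL
  rw [hc]
  generalize hy : √((n : ℝ) + 2) * x = y
  rw [show n + 2 = n + 1 + 1 from rfl, kerK_diag]
  have h := osc_rec n y
  have h' := osc_rec (n + 1) y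
  have e : ((n + 1 : ℕ) : ℝ) + 1 = n + 2 := by push_cast; ring
  have e' : ((n + 1 : ℕ) : ℝ) + 2 = n + 3 := by push_cast; ring
  rw [e, e'] at h'
  rw [e]
  have p : (0 : ℝ) < n + 2 := by positivity
  have q1 : √(1 - 1 / ((n : ℝ) + 2)) = √((n : ℝ) + 1) / √((n : ℝ) + 2) := by
    rw [← Real.sqrt_div (by positivity)]; congr 1; field_simp; ring
  have q2 : √(1 + 1 / ((n : ℝ) + 2)) = √((n : ℝ) + 3) / √((n : ℝ) + 2) := by
    rw [← Real.sqrt_div (by positivity)]; congr 1; field_simp; ring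
  rw [q1, q2]
  have h4 : √((n : ℝ) + 2) ^ 2 = (n : ℝ) + 2 := Real.sq_sqrt (by positivity)
  have pu : √((n : ℝ) + 2) ≠ 0 := by positivity
  rw [show n + 1 + 1 = n + 2 from rfl, show n + 1 + 2 = n + 2 + 1 from rfl] at *
  rw [← h4]
  clear hy q1 q2
  have hu : √(√((n : ℝ) + 2) ^ 2) = √((n : ℝ) + 2) := Real.sqrt_sq (Real.sqrt_nonneg _)
  simp only [hu]
  generalize √((n : ℝ) + 2) = u at *
  field_simp
  linear_combination osc (n+2) y * h + osc (n+1) y * h'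
end

section
/- Plancherel–Rotach exterior decay estimate: for every C > 0 and ε > 0 there exists a constant c > 0 such that for every integer N ≥ 1 and every τ > 0 with N sinh³τ ≥ C N^ε, setting y = √(2N) cosh τ, one has Σ_{k=0}^{N-1} ψ_k(y)² ≤ c · √N / (y² − 2N). -/
open Real MeasureTheory Filter Set

/-- The complex Gaussian's derivatives restrict to those of the real Gaussian. -/
lemma gauss_bridge (n : ℕ) : ∀ x : ℝ,
    iteratedDeriv n (fun z : ℂ => Complex.exp (-z ^ 2)) (x : ℂ) =
      ((iteratedDeriv n (fun t : ℝ => Real.exp (-t ^ 2)) x : ℝ) : ℂ) := by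
  induction n with
  | zero => intro x; simp
  | succ k ih =>
    intro x
    rw [iteratedDeriv_succ, iteratedDeriv_succ]
    have hc : ContDiff ℂ (⊤ : ℕ∞) (fun z : ℂ => Complex.exp (-z ^ 2)) := by fun_prop
    have hr : ContDiff ℝ (⊤ : ℕ∞) (fun t : ℝ => Real.exp (-t ^ 2)) := by fun_prop
    have h1 := (hc.differentiable_iteratedDeriv k (by exact_mod_cast WithTop.coe_lt_top _)
      (x : ℂ)).hasDerivAt.comp_ofReal
    have h2 := (hr.differentiable_iteratedDeriv k (by exact_mod_cast WithTop.coe_lt_top _)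
      x).hasDerivAt.ofReal_comp
    have h3 : (fun y : ℝ => iteratedDeriv k (fun z : ℂ => Complex.exp (-z ^ 2)) (y : ℂ)) =
        fun y : ℝ => ((iteratedDeriv k (fun t : ℝ => Real.exp (-t ^ 2)) y : ℝ) : ℂ) :=
      funext ih
    rw [h3] at h1
    exact h1.unique h2

lemma gauss_cauchy (n : ℕ) (y ρ α : ℝ) (hρ : 0 < ρ) (hα : 0 < α) (hα1 : α ≤ 1) :
    |iteratedDeriv n (fun t : ℝ => Real.exp (-t ^ 2)) y| ≤
      n.factorial * Real.exp (-y ^ 2 + α * y ^ 2 / 2 + ρ ^ 2 * (2 / α - 1)) / ρ ^ n := by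
  have hd : DiffContOnCl ℂ (fun z : ℂ => Complex.exp (-z ^ 2)) (Metric.ball (y : ℂ) ρ) := by
    apply Differentiable.diffContOnCl
    fun_prop
  have key := Complex.norm_iteratedDeriv_le_of_forall_mem_sphere_norm_le (n := n) hρ hd
    (C := Real.exp (-y ^ 2 + α * y ^ 2 / 2 + ρ ^ 2 * (2 / α - 1))) ?_
  · rw [gauss_bridge, Complex.norm_real, Real.norm_eq_abs] at key
    exact key
  · intro z hz
    rw [Complex.norm_exp, Real.exp_le_exp]
    have hz' : ‖z - y‖ = ρ := by simpa [dist_eq_norm] using hz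
    have h1 : (z.re - y) ^ 2 + z.im ^ 2 = ρ ^ 2 := by
      rw [← hz', ← Complex.normSq_eq_norm_sq, Complex.normSq_apply]
      simp
      ring
    have h2 : (-z ^ 2).re = -(z.re ^ 2 - z.im ^ 2) := by
      simp [pow_two]
    rw [h2]
    set u := z.re - y with hu
    have hre : z.re = y + u := by rw [hu]; ring
    have h4 : z.im ^ 2 = ρ ^ 2 - u ^ 2 := by linarith
    rw [hre, h4]
    have hu2 : u ^ 2 ≤ ρ ^ 2 := by nlinarith [sq_nonneg z.im]
    have h5 : -(2 * y * u) ≤ α * y ^ 2 / 2 + 2 * u ^ 2 / α := by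
      have : α * y ^ 2 / 2 + 2 * u ^ 2 / α + 2 * y * u = (α * y + 2 * u) ^ 2 / (2 * α) := by
        field_simp
        ring
      have : 0 ≤ (α * y + 2 * u) ^ 2 / (2 * α) := by positivity
      linarith
    have h6 : 2 * u ^ 2 * (1 / α - 1) ≤ 2 * ρ ^ 2 * (1 / α - 1) := by
      have : 0 ≤ 1 / α - 1 := by
        rw [sub_nonneg, le_div_iff₀ hα]; linarith
      gcongr
    have e1 : 2 * u ^ 2 / α = 2 * u ^ 2 * (1 / α) := by ring
    have e2 : ρ ^ 2 * (2 / α - 1) = 2 * ρ ^ 2 * (1 / α) - ρ ^ 2 := by ring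
    rw [e1] at h5
    rw [e2]
    nlinarith

lemma fact_bound (m : ℕ) :
    ((m + 1).factorial : ℝ) * Real.exp (m + 1) ≤
      Real.exp 1 * (m + 1) * ((m : ℝ) + 1) ^ (m + 1) := by
  induction m with
  | zero => simp
  | succ k ih =>
    have h0 : Real.exp 1 * ((k : ℝ) + 1) ^ (k + 2) ≤ ((k : ℝ) + 2) ^ (k + 2) := by
      have h1 : ((k : ℝ) + 1) / (k + 2) ≤ Real.exp (-(1 / ((k : ℝ) + 2))) := by
        have := Real.add_one_le_exp (-(1 / ((k : ℝ) + 2)))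
        refine le_trans (le_of_eq ?_) this
        field_simp
        ring
      have h2 := pow_le_pow_left₀ (by positivity) h1 (k + 2)
      rw [← Real.exp_nat_mul, div_pow, div_le_iff₀ (by positivity)] at h2
      have h3 : ((k + 2 : ℕ) : ℝ) * -(1 / ((k : ℝ) + 2)) = -1 := by
        push_cast; field_simp
      rw [h3] at h2
      calc _ ≤ Real.exp 1 * (Real.exp (-1) * ((k : ℝ) + 2) ^ (k + 2)) := by gcongr
        _ = _ := by rw [← mul_assoc, ← Real.exp_add]; simp
    have e1 : (((k + 1 + 1).factorial : ℕ) : ℝ) = ((k : ℝ) + 2) * ((k + 1).factorial : ℝ) := by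
      rw [Nat.factorial_succ (k + 1)]; push_cast; ring
    rw [e1]
    push_cast
    rw [Real.exp_add ((k : ℝ) + 1) 1]
    calc ((k : ℝ) + 2) * ((k + 1).factorial : ℝ) * (Real.exp (k + 1) * Real.exp 1)
        = ((k : ℝ) + 2) * Real.exp 1 * (((k + 1).factorial : ℝ) * Real.exp (k + 1)) := by ring
      _ ≤ ((k : ℝ) + 2) * Real.exp 1 * (Real.exp 1 * (k + 1) * ((k : ℝ) + 1) ^ (k + 1)) := by
          gcongr
      _ = ((k : ℝ) + 2) * Real.exp 1 * (Real.exp 1 * ((k : ℝ) + 1) ^ (k + 2)) := by ring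
      _ ≤ ((k : ℝ) + 2) * Real.exp 1 * ((k : ℝ) + 2) ^ (k + 2) := by gcongr
      _ = _ := by ring

/-- Chernoff-type bound for a single wave function. -/
lemma osc_bound (n : ℕ) (y r : ℝ) (hr : 0 < r) (hr1 : r ≤ 1) :
    osc n y ^ 2 ≤ Real.exp 1 * (n + 1) * (r ^ n)⁻¹ *
      Real.exp (-(y ^ 2 * ((1 - r) / (1 + r)))) := by
  set α := 2 * r / (1 + r) with hα
  have hα0 : 0 < α := by positivity
  have hα1 : α ≤ 1 := by rw [hα, div_le_one (by positivity)]; linarith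
  set ρ := Real.sqrt ((n + 1) * r / 2) with hρ
  have hρ0 : 0 < ρ := Real.sqrt_pos.mpr (by positivity)
  have hρ2 : ρ ^ 2 = (n + 1) * r / 2 := Real.sq_sqrt (by positivity)
  have hc := gauss_cauchy n y ρ α hρ0 hα0 hα1
  set D := iteratedDeriv n (fun t : ℝ => Real.exp (-t ^ 2)) y with hD
  have hD2 : D ^ 2 ≤ (n.factorial *
      Real.exp (-y ^ 2 + α * y ^ 2 / 2 + ρ ^ 2 * (2 / α - 1)) / ρ ^ n) ^ 2 := by
    rw [← sq_abs]; gcongr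
  have hosc : osc n y ^ 2 = (Real.sqrt Real.pi * 2 ^ n * n.factorial)⁻¹ *
      Real.exp (y ^ 2) * D ^ 2 := by
    unfold osc hermiteP
    rw [← hD]
    have e1 : ((-1 : ℝ) ^ n) ^ 2 = 1 := by rw [← pow_mul, mul_comm, pow_mul]; simp
    rw [mul_pow, mul_pow, mul_pow, mul_pow, e1, inv_pow, Real.sq_sqrt (by positivity),
      ← Real.exp_nat_mul, ← Real.exp_nat_mul]
    have : Real.exp (y ^ 2) = Real.exp (((2 : ℕ) : ℝ) * (-y ^ 2 / 2)) *
        Real.exp (((2 : ℕ) : ℝ) * y ^ 2) := by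
      rw [← Real.exp_add]; congr 1; push_cast; ring
    rw [this]; ring
  have hpi : (1 : ℝ) ≤ Real.sqrt Real.pi := by
    rw [Real.one_le_sqrt]; linarith [Real.pi_gt_three]
  rw [hosc]
  have hα' : 2 / α - 1 = 1 / r := by rw [hα]; field_simp; ring
  have hα'' : 1 - α = (1 - r) / (1 + r) := by rw [hα]; field_simp; ring
  have hf := fact_bound n
  have hsq : (n.factorial * Real.exp (-y ^ 2 + α * y ^ 2 / 2 + ρ ^ 2 * (2 / α - 1)) / ρ ^ n) ^ 2
      = (n.factorial : ℝ) ^ 2 * (Real.exp (-(2 * y ^ 2) + α * y ^ 2) * Real.exp (n + 1)) /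
        (((n : ℝ) + 1) ^ n * r ^ n / 2 ^ n) := by
    rw [div_pow, mul_pow, ← Real.exp_nat_mul, ← Real.exp_add]
    congr 1
    · congr 2
      rw [hα', hρ2]; push_cast; field_simp; try ring
    · rw [← pow_mul, mul_comm n 2, pow_mul, hρ2, div_pow, mul_pow]
  rw [hsq] at hD2
  have hE : Real.exp (-(y ^ 2 * ((1 - r) / (1 + r)))) =
      Real.exp (y ^ 2) * Real.exp (-(2 * y ^ 2) + α * y ^ 2) := by
    rw [← Real.exp_add, ← hα'']; congr 1; ring
  have hff : (n.factorial : ℝ) * Real.exp (n + 1) / ((n : ℝ) + 1) ^ n ≤ Real.exp 1 * (n + 1) := by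
    rw [div_le_iff₀ (by positivity)]
    rw [Nat.factorial_succ] at hf
    push_cast at hf
    have hn : (0 : ℝ) < n + 1 := by positivity
    refine le_of_mul_le_mul_left ?_ hn
    calc _ = ((n : ℝ) + 1) * n.factorial * Real.exp (n + 1) := by ring
      _ ≤ _ := hf
      _ = _ := by ring
  calc (Real.sqrt Real.pi * 2 ^ n * n.factorial)⁻¹ * Real.exp (y ^ 2) * D ^ 2
      ≤ (1 * 2 ^ n * (n.factorial : ℝ))⁻¹ * Real.exp (y ^ 2) *
        ((n.factorial : ℝ) ^ 2 * (Real.exp (-(2 * y ^ 2) + α * y ^ 2) * Real.exp (n + 1)) /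
        (((n : ℝ) + 1) ^ n * r ^ n / 2 ^ n)) := by gcongr
    _ = ((n.factorial : ℝ) * Real.exp (n + 1) / ((n : ℝ) + 1) ^ n) * (r ^ n)⁻¹ *
        (Real.exp (y ^ 2) * Real.exp (-(2 * y ^ 2) + α * y ^ 2)) := by
        field_simp
    _ ≤ _ := by rw [hE]; gcongr

lemma sinh_ineq (τ : ℝ) (hτ : 0 ≤ τ) :
    2 * τ * Real.cosh τ ≤ 2 * Real.sinh τ + Real.sinh τ ^ 3 := by
  have hder : ∀ x : ℝ, HasDerivAt
      (fun x => 2 * Real.sinh x + Real.sinh x ^ 3 - 2 * x * Real.cosh x)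
      (Real.sinh x * (3 * Real.sinh x * Real.cosh x - 2 * x)) x := by
    intro x
    have h := (((Real.hasDerivAt_sinh x).const_mul 2).add ((Real.hasDerivAt_sinh x).pow 3)).sub
      (((hasDerivAt_id x).const_mul 2).mul (Real.hasDerivAt_cosh x))
    refine h.congr_deriv ?_
    simp
    ring
  have hm : MonotoneOn (fun x => 2 * Real.sinh x + Real.sinh x ^ 3 - 2 * x * Real.cosh x)
      (Ici (0 : ℝ)) := by
    apply monotoneOn_of_deriv_nonneg (convex_Ici 0)
    · exact fun x _ => (hder x).continuousAt.continuousWithinAt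
    · exact fun x _ => (hder x).differentiableAt.differentiableWithinAt
    · intro x hx
      rw [interior_Ici] at hx
      have hx0 : 0 < x := hx
      rw [(hder x).deriv]
      have h1 : x ≤ Real.sinh x := Real.self_le_sinh_iff.mpr hx0.le
      have h2 := Real.one_le_cosh x
      apply mul_nonneg (by linarith)
      nlinarith
  have := hm (mem_Ici.mpr le_rfl) (mem_Ici.mpr hτ) hτ
  simp at this
  linarith

lemma kernel_bound (N : ℕ) (τ : ℝ) (hτ : 0 < τ) :
    (∑ k ∈ Finset.range N, osc k (Real.sqrt (2 * (N : ℝ)) * Real.cosh τ) ^ 2) ≤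
      Real.exp 1 * (N : ℝ) ^ 2 *
        Real.exp (-(N * (2 * Real.sinh τ * Real.cosh τ - 2 * τ))) := by
  set r := Real.exp (-(2 * τ)) with hr
  have hr0 : 0 < r := Real.exp_pos _
  have hr1 : r ≤ 1 := Real.exp_le_one_iff.mpr (by linarith)
  have hc := Real.cosh_pos τ
  have hth : (1 - r) / (1 + r) = Real.sinh τ / Real.cosh τ := by
    rw [div_eq_div_iff (by positivity) (by positivity), Real.sinh_eq, Real.cosh_eq]
    have : r = Real.exp (-τ) * Real.exp (-τ) := by rw [hr, ← Real.exp_add]; congr 1; ring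
    have h2 : Real.exp τ * Real.exp (-τ) = 1 := by rw [← Real.exp_add]; simp
    rw [this]
    linear_combination (-Real.exp (-τ)) * h2
  have hy : (Real.sqrt (2 * (N : ℝ)) * Real.cosh τ) ^ 2 = 2 * N * Real.cosh τ ^ 2 := by
    rw [mul_pow, Real.sq_sqrt (by positivity)]
  have hterm : ∀ k ∈ Finset.range N, osc k (Real.sqrt (2 * (N : ℝ)) * Real.cosh τ) ^ 2 ≤
      Real.exp 1 * N * Real.exp (-(N * (2 * Real.sinh τ * Real.cosh τ - 2 * τ))) := by
    intro k hk
    have hk' : k + 1 ≤ N := Finset.mem_range.mp hk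
    have hkN : (k : ℝ) + 1 ≤ N := by exact_mod_cast hk'
    refine (osc_bound k _ r hr0 hr1).trans ?_
    rw [hth, hy]
    have e1 : -(2 * (N : ℝ) * Real.cosh τ ^ 2 * (Real.sinh τ / Real.cosh τ)) =
        -(N * (2 * Real.sinh τ * Real.cosh τ)) := by field_simp
    have e2 : (r ^ k)⁻¹ ≤ Real.exp (N * (2 * τ)) := by
      rw [hr, ← Real.exp_nat_mul, ← Real.exp_neg, Real.exp_le_exp]
      nlinarith
    have e3 : Real.exp (-(N * (2 * Real.sinh τ * Real.cosh τ - 2 * τ))) =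
        Real.exp (N * (2 * τ)) * Real.exp (-(N * (2 * Real.sinh τ * Real.cosh τ))) := by
      rw [← Real.exp_add]; congr 1; ring
    rw [e1, e3, ← mul_assoc (Real.exp 1 * (N : ℝ))]
    gcongr
  refine (Finset.sum_le_sum hterm).trans (le_of_eq ?_)
  simp
  ring

lemma exp_decay (C ε : ℝ) (hC : 0 < C) (hε : 0 < ε) :
    ∃ c : ℝ, 0 < c ∧ ∀ N : ℕ, 1 ≤ N →
      (N : ℝ) ^ 3 * Real.exp (-(C * (N : ℝ) ^ ε / 2)) ≤ c := by
  obtain ⟨m, hm⟩ := exists_nat_ge (3 / ε)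
  refine ⟨m.factorial / (C / 2) ^ m, by positivity, fun N hN => ?_⟩
  have hN1 : (1 : ℝ) ≤ N := by exact_mod_cast hN
  have h1 : (N : ℝ) ^ 3 ≤ ((N : ℝ) ^ ε) ^ m := by
    rw [← Real.rpow_natCast, ← Real.rpow_natCast, ← Real.rpow_mul (by positivity)]
    apply Real.rpow_le_rpow_of_exponent_le hN1
    rw [div_le_iff₀ hε] at hm
    push_cast
    linarith
  have h2 := Real.pow_div_factorial_le_exp (C * (N : ℝ) ^ ε / 2) (by positivity) m
  rw [Real.exp_neg, ← div_eq_mul_inv, div_le_div_iff₀ (by positivity) (by positivity)]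
  rw [div_le_iff₀ (by positivity)] at h2
  calc (N : ℝ) ^ 3 * (C / 2) ^ m ≤ ((N : ℝ) ^ ε) ^ m * (C / 2) ^ m := by gcongr
    _ = (C * (N : ℝ) ^ ε / 2) ^ m := by rw [← mul_pow]; congr 1; ring
    _ ≤ _ := by linarith

/-- Plancherel–Rotach exterior decay estimate. -/
theorem plancherel_rotach_exterior (C ε : ℝ) (hC : 0 < C) (hε : 0 < ε) :
    ∃ c : ℝ, 0 < c ∧ ∀ N : ℕ, 1 ≤ N → ∀ τ : ℝ, 0 < τ →
      C * (N : ℝ) ^ ε ≤ (N : ℝ) * Real.sinh τ ^ 3 →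
      (∑ k ∈ Finset.range N, osc k (Real.sqrt (2 * (N : ℝ)) * Real.cosh τ) ^ 2) ≤
        c * Real.sqrt (N : ℝ) /
          ((Real.sqrt (2 * (N : ℝ)) * Real.cosh τ) ^ 2 - 2 * (N : ℝ)) := by
  obtain ⟨c₀, hc₀, hdec⟩ := exp_decay C ε hC hε
  refine ⟨2 * Real.exp 1 * (c₀ + 48), by positivity, fun N hN τ hτ hyp => ?_⟩
  have hN1 : (1 : ℝ) ≤ N := by exact_mod_cast hN
  have hs : 0 < Real.sinh τ := Real.sinh_pos_iff.mpr hτ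
  have hy : (Real.sqrt (2 * (N : ℝ)) * Real.cosh τ) ^ 2 - 2 * (N : ℝ) =
      2 * N * Real.sinh τ ^ 2 := by
    rw [mul_pow, Real.sq_sqrt (by positivity), Real.cosh_sq]; ring
  rw [hy, le_div_iff₀ (by positivity)]
  have hK := kernel_bound N τ hτ
  have hsq : (1 : ℝ) ≤ Real.sqrt N := Real.one_le_sqrt.mpr hN1
  have hch := Real.cosh_pos τ
  have hcs := Real.cosh_sq τ
  have hin := sinh_ineq τ hτ.le
  set s := Real.sinh τ
  set ch := Real.cosh τ
  have hf : s ^ 3 / ch ≤ 2 * s * ch - 2 * τ := by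
    rw [div_le_iff₀ hch]; nlinarith
  have main : (N : ℝ) ^ 3 * s ^ 2 * Real.exp (-(N * (2 * s * ch - 2 * τ))) ≤ c₀ + 48 := by
    rcases le_total s 1 with h1 | h1
    · have hch2 : ch ≤ 2 := by nlinarith
      have h2 : s ^ 3 / 2 ≤ 2 * s * ch - 2 * τ := by
        refine le_trans ?_ hf
        gcongr
      have h3 : C * (N : ℝ) ^ ε / 2 ≤ N * (2 * s * ch - 2 * τ) := by nlinarith
      calc (N : ℝ) ^ 3 * s ^ 2 * Real.exp (-(N * (2 * s * ch - 2 * τ)))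
          ≤ (N : ℝ) ^ 3 * 1 * Real.exp (-(C * (N : ℝ) ^ ε / 2)) := by
            gcongr
            exact pow_le_one₀ hs.le h1
        _ ≤ c₀ + 48 := by rw [mul_one]; linarith [hdec N hN]
    · have hch2 : ch ≤ 2 * s := by nlinarith
      have h2 : s ^ 2 / 2 ≤ 2 * s * ch - 2 * τ := by
        refine le_trans ?_ hf
        rw [div_le_div_iff₀ (by norm_num) hch]
        nlinarith [sq_nonneg s]
      have h3 : N * s ^ 2 / 2 ≤ N * (2 * s * ch - 2 * τ) := by nlinarith
      have h4 := Real.pow_div_factorial_le_exp (N * s ^ 2 / 2) (by positivity) 3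
      have h5 : (N : ℝ) ^ 3 * s ^ 2 ≤ (N * s ^ 2) ^ 3 := by
        have : s ^ 2 ≤ s ^ 6 := pow_le_pow_right₀ h1 (by norm_num)
        calc (N : ℝ) ^ 3 * s ^ 2 ≤ (N : ℝ) ^ 3 * s ^ 6 := by gcongr
          _ = _ := by ring
      have h6 : (N : ℝ) ^ 3 * s ^ 2 ≤ 48 * Real.exp (N * s ^ 2 / 2) := by
        have e : ((Nat.factorial 3 : ℕ) : ℝ) = 6 := by norm_num [Nat.factorial]
        rw [e] at h4
        have : (N * s ^ 2 / 2) ^ 3 / 6 = (N * s ^ 2) ^ 3 / 48 := by ring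
        linarith
      calc (N : ℝ) ^ 3 * s ^ 2 * Real.exp (-(N * (2 * s * ch - 2 * τ)))
          ≤ 48 * Real.exp (N * s ^ 2 / 2) * Real.exp (-(N * s ^ 2 / 2)) := by gcongr
        _ = 48 := by rw [mul_assoc, ← Real.exp_add]; simp
        _ ≤ c₀ + 48 := by linarith
  calc _ ≤ Real.exp 1 * (N : ℝ) ^ 2 * Real.exp (-(N * (2 * s * ch - 2 * τ))) *
        (2 * N * s ^ 2) := by gcongr
    _ = 2 * Real.exp 1 * ((N : ℝ) ^ 3 * s ^ 2 * Real.exp (-(N * (2 * s * ch - 2 * τ)))) := by ring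
    _ ≤ 2 * Real.exp 1 * (c₀ + 48) := by gcongr
    _ ≤ 2 * Real.exp 1 * (c₀ + 48) * Real.sqrt N := le_mul_of_one_le_right (by positivity) hsq
end

section
/- Uniform supremum bound for oscillator wave functions: there exists a constant c > 0 such that for every integer N ≥ 1, sup_{y ∈ ℝ} |ψ_N(y)| ≤ c · N^{−1/12}. -/
open Real MeasureTheory Filter Set

open Polynomial in
/-- Hermite polynomials by recursion. -/
noncomputable def hP : ℕ → Polynomial ℝ
  | 0 => 1
  | n + 1 => 2 * X * hP n - derivative (hP n)

open Polynomial in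
lemma hP_succ (n : ℕ) : hP (n + 1) = 2 * X * hP n - derivative (hP n) := rfl

open Polynomial in
lemma hP_deriv (n : ℕ) : derivative (hP (n + 1)) = 2 * ((n : Polynomial ℝ) + 1) * hP n := by
  induction n with
  | zero => simp [hP]
  | succ n ih =>
    have h1 : derivative (hP (n + 1 + 1)) =
        2 * hP (n + 1) + 2 * X * derivative (hP (n + 1)) - derivative (derivative (hP (n + 1))) := by
      rw [hP_succ (n + 1)]
      simp only [derivative_sub, derivative_mul, derivative_X, derivative_ofNat]
      ring
    have h2 : derivative (derivative (hP (n + 1))) =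
        2 * ((n : Polynomial ℝ) + 1) * derivative (hP n) := by
      rw [ih]
      simp [derivative_mul]
    rw [h1, h2, ih]
    push_cast
    have h3 := hP_succ n
    linear_combination (-2 * ((n : Polynomial ℝ) + 1)) * h3

open Polynomial in
lemma hP_ode (n : ℕ) : derivative (derivative (hP n)) =
    2 * X * derivative (hP n) - 2 * (n : Polynomial ℝ) * hP n := by
  have h := hP_deriv n
  rw [hP_succ] at h
  simp only [derivative_sub, derivative_mul, derivative_X, derivative_ofNat] at h
  linear_combination -h

lemma gauss_hasDerivAt (x : ℝ) : HasDerivAt (fun t : ℝ => Real.exp (-t ^ 2))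
    (Real.exp (-x ^ 2) * (-(2 * x))) x := by
  have h : HasDerivAt (fun t : ℝ => -t ^ 2) (-(2 * x)) x := by
    refine HasDerivAt.congr_deriv ((hasDerivAt_pow 2 x).neg) ?_
    simp
  exact h.exp

lemma iter_gauss (n : ℕ) : iteratedDeriv n (fun t : ℝ => Real.exp (-t ^ 2)) =
    fun x => (-1) ^ n * (hP n).eval x * Real.exp (-x ^ 2) := by
  induction n with
  | zero => ext x; simp [hP]
  | succ n ih =>
    rw [iteratedDeriv_succ, ih]
    ext x
    have h := ((((hP n).hasDerivAt x).const_mul ((-1 : ℝ) ^ n)).mul (gauss_hasDerivAt x))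
    refine h.deriv.trans ?_
    rw [hP_succ]
    simp only [Polynomial.eval_sub, Polynomial.eval_mul, Polynomial.eval_X, Polynomial.eval_ofNat]
    ring

lemma hermiteP_eq (n : ℕ) (x : ℝ) : hermiteP n x = (hP n).eval x := by
  unfold hermiteP
  rw [iter_gauss]
  have h1 : Real.exp (x ^ 2) * Real.exp (-x ^ 2) = 1 := by
    rw [← Real.exp_add]; simp
  have h2 : (-1 : ℝ) ^ n * (-1) ^ n = 1 := by
    rw [← mul_pow]; simp
  simp only
  linear_combination (Polynomial.eval x (hP n)) * h1 * ((-1 : ℝ) ^ n * (-1) ^ n)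
    + (Polynomial.eval x (hP n)) * h2

/-- normalizing constant -/
noncomputable def nrm (n : ℕ) : ℝ :=
  (Real.sqrt (Real.sqrt Real.pi * 2 ^ n * (n.factorial : ℝ)))⁻¹

lemma osc_eq (n : ℕ) (x : ℝ) :
    osc n x = nrm n * Real.exp (-x ^ 2 / 2) * (hP n).eval x := by
  unfold osc nrm; rw [hermiteP_eq]

lemma nrm_sq (n : ℕ) : nrm n ^ 2 = (Real.sqrt Real.pi * 2 ^ n * (n.factorial : ℝ))⁻¹ := by
  unfold nrm
  rw [inv_pow, Real.sq_sqrt (by positivity)]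

lemma nrm_sq_succ (n : ℕ) : nrm (n + 1) ^ 2 * (2 * (n + 1)) = nrm n ^ 2 := by
  rw [nrm_sq, nrm_sq, Nat.factorial_succ]
  push_cast
  have : (Real.sqrt Real.pi) ≠ 0 := by positivity
  have : (n.factorial : ℝ) ≠ 0 := by positivity
  rw [pow_succ]
  field_simp

/-- derivative of osc -/
noncomputable def oscD (n : ℕ) (x : ℝ) : ℝ :=
  nrm n * Real.exp (-x ^ 2 / 2) * ((hP n).derivative.eval x - x * (hP n).eval x)

lemma gauss2_hasDerivAt (x : ℝ) : HasDerivAt (fun t : ℝ => Real.exp (-t ^ 2 / 2))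
    (Real.exp (-x ^ 2 / 2) * (-x)) x := by
  have h : HasDerivAt (fun t : ℝ => -t ^ 2 / 2) (-x) x := by
    have := (hasDerivAt_pow 2 x).neg.div_const 2
    refine HasDerivAt.congr_deriv (this) ?_
    simp
    ring
  exact h.exp

lemma osc_hasDerivAt (n : ℕ) (x : ℝ) : HasDerivAt (osc n) (oscD n x) x := by
  have e : osc n = fun x => nrm n * Real.exp (-x ^ 2 / 2) * (hP n).eval x :=
    funext (osc_eq n)
  rw [e]
  refine HasDerivAt.congr_deriv (((gauss2_hasDerivAt x).const_mul (nrm n)).mul ((hP n).hasDerivAt x)) ?_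
  unfold oscD; ring

lemma oscD_hasDerivAt (n : ℕ) (x : ℝ) :
    HasDerivAt (oscD n) (-((2 * n + 1 - x ^ 2) * osc n x)) x := by
  have h := ((gauss2_hasDerivAt x).const_mul (nrm n)).mul
    (((hP n).derivative.hasDerivAt x).sub ((hasDerivAt_id x).mul ((hP n).hasDerivAt x)))
  have o := congrArg (Polynomial.eval x) (hP_ode n)
  simp only [Polynomial.eval_sub, Polynomial.eval_mul, Polynomial.eval_X, Polynomial.eval_ofNat,
    Polynomial.eval_natCast] at o
  refine HasDerivAt.congr_deriv (h) ?_
  rw [osc_eq]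
  simp only [id, Pi.sub_apply, Pi.mul_apply]
  linear_combination (nrm n * Real.exp (-x ^ 2 / 2)) * o

lemma osc_zero_step (n : ℕ) : osc (n + 2) 0 ^ 2 * (n + 2) = osc n 0 ^ 2 * (n + 1) := by
  have e : (hP (n + 2)).eval 0 = -(2 * ((n : ℝ) + 1) * (hP n).eval 0) := by
    rw [hP_succ (n + 1), hP_deriv]; simp
  rw [osc_eq, osc_eq, e, mul_pow, mul_pow, mul_pow, mul_pow, ← nrm_sq_succ n,
    ← nrm_sq_succ (n + 1)]
  push_cast
  ring

lemma osc_zero_bound (n : ℕ) : (osc n 0 ^ 2) ^ 2 * (n + 1) ≤ 1 := by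
  induction n using Nat.twoStepInduction with
  | zero =>
    rw [osc_eq, mul_pow (nrm 0 * _), mul_pow (nrm 0), nrm_sq]
    have : (1 : ℝ) ≤ Real.sqrt Real.pi := by
      rw [Real.one_le_sqrt]; linarith [Real.pi_gt_three]
    have h2 : (Real.sqrt Real.pi)⁻¹ ≤ 1 := inv_le_one_of_one_le₀ this
    have h3 : 0 ≤ (Real.sqrt Real.pi)⁻¹ := by positivity
    simp [hP]
    exact inv_le_one_of_one_le₀ (one_le_pow₀ this)
  | one => rw [osc_eq]; simp [hP]
  | more n ih _ =>
    have h := osc_zero_step n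
    set a := osc n 0 ^ 2
    set b := osc (n + 2) 0 ^ 2
    have hn : (0 : ℝ) ≤ n := Nat.cast_nonneg n
    have h2 : b ^ 2 * (n + 2) ^ 2 = a ^ 2 * (n + 1) ^ 2 := by
      rw [← mul_pow, h, mul_pow]
    push_cast
    have h3 : b ^ 2 * (n + 2 + 1) * (n + 2) ^ 2 ≤ 1 * (n + 2) ^ 2 := by
      have : b ^ 2 * (n + 2 + 1) * (n + 2) ^ 2 = (a ^ 2 * (n + 1)) * ((n + 1) * (n + 3)) := by
        linear_combination (n + 3) * h2
      rw [this]
      have : (a ^ 2 * (n + 1)) * (((n : ℝ) + 1) * (n + 3)) ≤ 1 * ((n + 1) * (n + 3)) :=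
        mul_le_mul_of_nonneg_right ih (by positivity)
      nlinarith
    exact le_of_mul_le_mul_right h3 (by positivity)

lemma oscD_zero (n : ℕ) : oscD (n + 1) 0 ^ 2 = 2 * (n + 1) * osc n 0 ^ 2 := by
  unfold oscD
  rw [hP_deriv, osc_eq, mul_pow, mul_pow, mul_pow, mul_pow, ← nrm_sq_succ n]
  simp
  ring

lemma G0_bound (n : ℕ) : Real.sqrt (2 * (n + 1 : ℕ) + 1) * osc (n + 1) 0 ^ 2 +
    oscD (n + 1) 0 ^ 2 / Real.sqrt (2 * (n + 1 : ℕ) + 1) ≤ 3 := by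
  have hn : (0 : ℝ) ≤ n := Nat.cast_nonneg n
  have h1 := osc_zero_bound (n + 1)
  have h2 := osc_zero_bound n
  rw [oscD_zero]
  push_cast at *
  set a := osc n 0 ^ 2
  set b := osc (n + 1) 0 ^ 2
  have hs : Real.sqrt (2 * (n + 1) + 1) ^ 2 = 2 * ((n : ℝ) + 1) + 1 := Real.sq_sqrt (by positivity)
  have hs0 : 0 < Real.sqrt (2 * ((n : ℝ) + 1) + 1) := by positivity
  set s := Real.sqrt (2 * ((n : ℝ) + 1) + 1)
  have k1 : s * b ≤ 3 / 2 := by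
    apply le_of_sq_le_sq _ (by norm_num)
    rw [mul_pow, hs]; nlinarith [sq_nonneg b]
  have k2 : 2 * (n + 1) * a / s ≤ 3 / 2 := by
    apply le_of_sq_le_sq _ (by norm_num)
    rw [div_pow, hs, div_le_iff₀ (by positivity)]
    nlinarith [sq_nonneg a]
  linarith

lemma osc_neg (n : ℕ) (x : ℝ) : |osc n (-x)| = |osc n x| := by
  have h : ∀ n, ∀ x : ℝ, (hP n).eval (-x) = (-1) ^ n * (hP n).eval x := by
    intro n
    induction n using Nat.twoStepInduction with
    | zero => simp [hP]
    | one => simp [hP]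
    | more n ih1 ih2 =>
      intro x
      rw [hP_succ (n + 1), hP_deriv]
      simp [ih1, ih2]
      ring
  rw [osc_eq, osc_eq, h]
  simp [abs_mul]

lemma osc_tendsto (n : ℕ) : Tendsto (osc n) atTop (nhds 0) := by
  have h1 : Tendsto (fun x : ℝ => (hP n).eval x / Real.exp x) atTop (nhds 0) :=
    Polynomial.tendsto_div_exp_atTop _
  have h2 : Tendsto (fun x : ℝ => |nrm n| * |(hP n).eval x / Real.exp x|) atTop (nhds 0) := by
    simpa using h1.abs.const_mul |nrm n|
  apply squeeze_zero_norm' _ h2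
  filter_upwards [eventually_ge_atTop 2] with x hx
  rw [osc_eq, Real.norm_eq_abs, abs_mul, abs_mul, abs_div, Real.abs_exp, Real.abs_exp, mul_assoc,
    div_eq_mul_inv |_|, ← Real.exp_neg, mul_comm |_| (Real.exp (-x))]
  have : Real.exp (-x ^ 2 / 2) ≤ Real.exp (-x) := Real.exp_le_exp.2 (by nlinarith)
  gcongr

section ode
variable {f g : ℝ → ℝ} {L : ℝ}

/-- WKB energy bound in the oscillatory region. -/
lemma wkb (hf : ∀ x, HasDerivAt f (g x) x) (hg : ∀ x, HasDerivAt g (-((L - x ^ 2) * f x)) x)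
    {x1 : ℝ} (hx1 : 0 ≤ x1) (hL1 : 1 ≤ L) (hL : L ≤ (L - x1 ^ 2) ^ 3) (h0 : Real.sqrt L * f 0 ^ 2 + g 0 ^ 2 / Real.sqrt L ≤ 3)
    {x : ℝ} (hx0 : 0 ≤ x) (hx : x ≤ x1) :
    Real.sqrt (L - x ^ 2) * f x ^ 2 + g x ^ 2 / Real.sqrt (L - x ^ 2) ≤ 18 := by
  have hq1 : 0 < L - x1 ^ 2 := by
    by_contra hc
    have : (L - x1 ^ 2) ^ 3 ≤ 0 := by
      have := Odd.pow_nonpos (n := 3) (by decide) (not_lt.1 hc)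
      exact this
    linarith
  have hqm : ∀ t ∈ Icc 0 x1, L - x1 ^ 2 ≤ L - t ^ 2 := by
    intro t ht; nlinarith [ht.1, ht.2]
  have hq : ∀ t ∈ Icc 0 x1, 0 < L - t ^ 2 := fun t ht => lt_of_lt_of_le hq1 (hqm t ht)
  set r : ℝ → ℝ := fun t => Real.sqrt (L - t ^ 2) with hr
  have hrp : ∀ t ∈ Icc 0 x1, 0 < r t := fun t ht => Real.sqrt_pos.2 (hq t ht)
  have hr2 : ∀ t ∈ Icc 0 x1, r t ^ 2 = L - t ^ 2 := fun t ht => Real.sq_sqrt (hq t ht).le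
  set k : ℝ → ℝ := fun t => t / r t ^ 3 with hk
  have hk1 : ∀ t ∈ Icc 0 x1, k t ≤ 1 := by
    intro t ht
    have h3 : 0 < r t ^ 3 := pow_pos (hrp t ht) 3
    rw [hk]
    simp only
    rw [div_le_one h3]
    apply le_of_sq_le_sq _ h3.le
    have e : (r t ^ 3) ^ 2 = (L - t ^ 2) ^ 3 := by rw [← hr2 t ht]; ring
    rw [e]
    have := pow_le_pow_left₀ hq1.le (hqm t ht) 3
    have := hq t ht
    linarith
  have hk0 : ∀ t ∈ Icc 0 x1, 0 ≤ k t := fun t ht =>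
    div_nonneg ht.1 (pow_pos (hrp t ht) 3).le
  have hrd : ∀ t ∈ Icc 0 x1, HasDerivAt r (-t / r t) t := by
    intro t ht
    have h : HasDerivAt (fun t : ℝ => L - t ^ 2) (-(2 * t)) t := by
      refine HasDerivAt.congr_deriv ((hasDerivAt_pow 2 t).const_sub L) ?_
      simp
    refine HasDerivAt.congr_deriv (h.sqrt (hq t ht).ne') ?_
    have := (hrp t ht).ne'
    change -(2 * t) / (2 * r t) = -t / r t
    field_simp
  have hkd : ∀ t ∈ Icc 0 x1, HasDerivAt k (1 / r t ^ 3 + 3 * t ^ 2 / r t ^ 5) t := by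
    intro t ht
    have hne := (hrp t ht).ne'
    refine HasDerivAt.congr_deriv ((hasDerivAt_id t).div ((hrd t ht).pow 3) (pow_ne_zero 3 hne)) ?_
    simp only [id]
    field_simp
    push_cast
    ring
  set G : ℝ → ℝ := fun t => r t * f t ^ 2 + g t ^ 2 / r t with hG
  set T : ℝ → ℝ := fun t => G t - k t * (f t * g t) with hT
  have hTd : ∀ t ∈ Icc 0 x1, HasDerivAt T (-(1 / r t ^ 3 + 3 * t ^ 2 / r t ^ 5) * (f t * g t)) t := by
    intro t ht
    have hne := (hrp t ht).ne'
    have h := (((hrd t ht).mul ((hf t).pow 2)).add (((hg t).pow 2).div (hrd t ht) hne)).sub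
      ((hkd t ht).mul ((hf t).mul (hg t)))
    refine HasDerivAt.congr_deriv (h) ?_
    simp only [Pi.pow_apply, Pi.mul_apply, hk, ← hr2 t ht]
    field_simp
    push_cast
    ring
  have hfg : ∀ t ∈ Icc 0 x1, |f t * g t| ≤ G t / 2 := by
    intro t ht
    have hp := hrp t ht
    have e : G t = (r t ^ 2 * f t ^ 2 + g t ^ 2) / r t := by
      simp only [hG]; field_simp
    rw [e, div_div, le_div_iff₀ (by positivity)]
    rcases abs_cases (f t * g t) with ⟨h, _⟩ | ⟨h, _⟩ <;> rw [h]
    · nlinarith [sq_nonneg (r t * f t - g t)]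
    · nlinarith [sq_nonneg (r t * f t + g t)]
  have hTG : ∀ t ∈ Icc 0 x1, G t / 2 ≤ T t := by
    intro t ht
    have h1 := hfg t ht
    have h2 : k t * (f t * g t) ≤ |f t * g t| := by
      have a1 := mul_le_mul_of_nonneg_left (le_abs_self (f t * g t)) (hk0 t ht)
      have a2 := mul_le_mul_of_nonneg_right (hk1 t ht) (abs_nonneg (f t * g t))
      linarith
    simp only [hT]
    linarith
  have hW : ∀ t ∈ Icc 0 x1, HasDerivAt (fun t => T t * Real.exp (-k t))
      ((-(1 / r t ^ 3 + 3 * t ^ 2 / r t ^ 5) * (f t * g t)) * Real.exp (-k t) +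
        T t * (Real.exp (-k t) * (-(1 / r t ^ 3 + 3 * t ^ 2 / r t ^ 5)))) t :=
    fun t ht => (hTd t ht).mul (hkd t ht).neg.exp
  have hanti : AntitoneOn (fun t => T t * Real.exp (-k t)) (Icc 0 x1) := by
    apply antitoneOn_of_hasDerivWithinAt_nonpos (convex_Icc 0 x1)
      (fun t ht => (hW t ht).continuousAt.continuousWithinAt)
      (fun t ht => (hW t (interior_subset ht)).hasDerivWithinAt)
    intro t ht
    have ht := interior_subset ht
    have hp := hrp t ht
    have h1 := hfg t ht
    have h2 := hTG t ht
    have h3 : 0 ≤ f t * g t + T t := by linarith [neg_abs_le (f t * g t)]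
    have h4 : 0 ≤ (1 / r t ^ 3 + 3 * t ^ 2 / r t ^ 5) := by positivity
    have h5 := mul_nonneg (mul_nonneg h4 (Real.exp_pos (-k t)).le) h3
    linarith
  have hfin := hanti (left_mem_Icc.2 hx1) ⟨hx0, hx⟩ hx0
  have hxm : x ∈ Icc 0 x1 := ⟨hx0, hx⟩
  have hk00 : k 0 = 0 := by simp [hk]
  have hr0 : r 0 = Real.sqrt L := by simp [hr]
  have hT0 : T 0 ≤ 3 := by
    simp only [hT, hG, hk00, hr0]; linarith
  simp only [hk00, neg_zero, Real.exp_zero, mul_one] at hfin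
  have h6 : T x * Real.exp (-k x) ≤ 3 := hfin.trans hT0
  have h7 : T x ≤ 3 * Real.exp (k x) := by
    rw [Real.exp_neg, ← div_eq_mul_inv, div_le_iff₀ (Real.exp_pos _)] at h6
    exact h6
  have h8 : Real.exp (k x) ≤ 3 := by
    have := Real.exp_le_exp.2 (hk1 x hxm)
    linarith [Real.exp_one_lt_d9]
  have h9 := hTG x hxm
  change G x ≤ 18
  linarith

lemma full (hf : ∀ x, HasDerivAt f (g x) x) (hg : ∀ x, HasDerivAt g (-((L - x ^ 2) * f x)) x)
    {v : ℝ} (hv : 1 ≤ v) (hvL : L = v ^ 12)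
    (h0 : Real.sqrt L * f 0 ^ 2 + g 0 ^ 2 / Real.sqrt L ≤ 3)
    (hlim : Tendsto f atTop (nhds 0))
    {x : ℝ} (hx0 : 0 ≤ x) : |f x| ≤ 10 / v := by
  have hv0 : 0 < v := by linarith
  have hL1 : 1 ≤ L := by rw [hvL]; exact one_le_pow₀ hv
  have hv4 : v ^ 4 ≤ v ^ 12 := pow_le_pow_right₀ hv (by norm_num)
  set x1 := Real.sqrt (v ^ 12 - v ^ 4) with hx1
  have hx10 : 0 ≤ x1 := Real.sqrt_nonneg _
  have hx1s : x1 ^ 2 = v ^ 12 - v ^ 4 := Real.sq_sqrt (by linarith)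
  have hq1 : L - x1 ^ 2 = v ^ 4 := by rw [hx1s, hvL]; ring
  have hLx : L ≤ (L - x1 ^ 2) ^ 3 := by rw [hq1, hvL]; apply le_of_eq; ring
  have hw : ∀ t, 0 ≤ t → t ≤ x1 →
    Real.sqrt (L - t ^ 2) * f t ^ 2 + g t ^ 2 / Real.sqrt (L - t ^ 2) ≤ 18 :=
    fun t h1 h2 => wkb hf hg hx10 hL1 hLx h0 h1 h2
  have hA : ∀ t, 0 ≤ t → t ≤ x1 → |f t| ≤ 5 / v := by
    intro t h1 h2
    have h3 := hw t h1 h2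
    have h4 : v ^ 2 ≤ Real.sqrt (L - t ^ 2) := by
      apply Real.le_sqrt_of_sq_le
      nlinarith
    have h5 : 0 ≤ g t ^ 2 / Real.sqrt (L - t ^ 2) := by positivity
    have h6 : v ^ 2 * f t ^ 2 ≤ 18 :=
      (mul_le_mul_of_nonneg_right h4 (sq_nonneg _)).trans (by linarith)
    apply abs_le_of_sq_le_sq _ (by positivity)
    rw [div_pow, le_div_iff₀ (by positivity)]
    linarith
  have hs1 : Real.sqrt (L - x1 ^ 2) = v ^ 2 := by
    rw [hq1]; rw [show v ^ 4 = (v ^ 2) ^ 2 by ring]; exact Real.sqrt_sq (by positivity)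
  have hE1 : g x1 ^ 2 + (L - x1 ^ 2) * f x1 ^ 2 ≤ 18 * v ^ 2 := by
    have h := hw x1 hx10 le_rfl
    rw [hs1] at h
    rw [hq1]
    have := mul_le_mul_of_nonneg_right h (sq_nonneg v)
    calc _ = (v ^ 2 * f x1 ^ 2 + g x1 ^ 2 / v ^ 2) * v ^ 2 := by field_simp; ring
      _ ≤ _ := this
  have hEd : ∀ t, HasDerivAt (fun t => g t ^ 2 + (L - t ^ 2) * f t ^ 2) (-(2 * t * f t ^ 2)) t := by
    intro t
    have h : HasDerivAt (fun t : ℝ => L - t ^ 2) (-(2 * t)) t := by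
      refine HasDerivAt.congr_deriv ((hasDerivAt_pow 2 t).const_sub L) ?_
      simp
    refine HasDerivAt.congr_deriv (((hg t).pow 2).add (h.mul ((hf t).pow 2))) ?_
    push_cast
    ring
  have hEa : AntitoneOn (fun t => g t ^ 2 + (L - t ^ 2) * f t ^ 2) (Ici 0) := by
    apply antitoneOn_of_hasDerivWithinAt_nonpos (convex_Ici 0)
      (fun t _ => (hEd t).continuousAt.continuousWithinAt)
      (fun t _ => (hEd t).hasDerivWithinAt)
    intro t ht
    have ht : 0 ≤ t := interior_subset ht
    have : 0 ≤ 2 * t * f t ^ 2 := by positivity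
    linarith
  have hx1v : x1 ≤ v ^ 6 := by
    apply le_of_sq_le_sq _ (by positivity)
    rw [hx1s]; nlinarith [pow_pos hv0 4]
  have hgb : ∀ t ∈ Icc x1 (v ^ 6), ‖g t‖ ≤ 5 * v := by
    intro t ht
    have ht0 : 0 ≤ t := hx10.trans ht.1
    have h := hEa (mem_Ici.2 hx10) (mem_Ici.2 ht0) ht.1
    simp only at h
    have hq : 0 ≤ L - t ^ 2 := by
      rw [hvL]
      have := pow_le_pow_left₀ ht0 ht.2 2
      have e : (v ^ 6) ^ 2 = v ^ 12 := by ring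
      linarith
    have := mul_nonneg hq (sq_nonneg (f t))
    rw [Real.norm_eq_abs]
    apply abs_le_of_sq_le_sq _ (by positivity)
    rw [mul_pow]
    nlinarith [sq_nonneg v]
  have hlen : v ^ 6 - x1 ≤ 1 / v ^ 2 := by
    rw [le_div_iff₀ (by positivity)]
    have h6 : 0 < v ^ 6 := by positivity
    have e : (v ^ 6 - x1) * (v ^ 6 + x1) = v ^ 4 := by
      have : (v ^ 6 - x1) * (v ^ 6 + x1) = v ^ 12 - x1 ^ 2 := by ring
      rw [this, hx1s]; ring
    have h7 : (v ^ 6 - x1) * v ^ 6 ≤ v ^ 4 := by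
      have := mul_nonneg (sub_nonneg.2 hx1v) hx10
      nlinarith
    have h8 : ((v ^ 6 - x1) * v ^ 2) * v ^ 4 ≤ 1 * v ^ 4 := by
      calc _ = (v ^ 6 - x1) * v ^ 6 := by ring
        _ ≤ _ := by linarith
    exact le_of_mul_le_mul_right h8 (by positivity)
  have hB : ∀ t, x1 ≤ t → t ≤ v ^ 6 → |f t| ≤ 10 / v := by
    intro t h1 h2
    have hm := (convex_Icc x1 (v ^ 6)).norm_image_sub_le_of_norm_hasDerivWithin_le
      (fun t _ => (hf t).hasDerivWithinAt) hgb (left_mem_Icc.2 hx1v) ⟨h1, h2⟩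
    rw [Real.norm_eq_abs, Real.norm_eq_abs, abs_of_nonneg (sub_nonneg.2 h1)] at hm
    have h3 : 5 * v * (t - x1) ≤ 5 * v * (1 / v ^ 2) := by
      apply mul_le_mul_of_nonneg_left _ (by positivity)
      linarith
    have h4 : 5 * v * (1 / v ^ 2) = 5 / v := by field_simp
    have h5 := hA x1 hx10 le_rfl
    have h6 := abs_sub_abs_le_abs_sub (f t) (f x1)
    have h7 : 10 / v = 5 / v + 5 / v := by ring
    linarith
  rcases le_total x x1 with h | h
  · refine (hA x hx0 h).trans ?_
    gcongr; norm_num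
  rcases le_total x (v ^ 6) with h' | h'
  · exact hB x h h'
  have hd1 : ∀ t, HasDerivAt (fun t => f t ^ 2) (2 * (f t * g t)) t := by
    intro t
    refine HasDerivAt.congr_deriv ((hf t).pow 2) ?_
    push_cast
    ring
  have hd2 : ∀ t, HasDerivAt (fun t => 2 * (f t * g t))
      (2 * (g t ^ 2 + (t ^ 2 - L) * f t ^ 2)) t := by
    intro t
    refine HasDerivAt.congr_deriv (((hf t).mul (hg t)).const_mul 2) ?_
    ring
  have hmono : MonotoneOn (fun t => 2 * (f t * g t)) (Ici (v ^ 6)) := by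
    apply monotoneOn_of_hasDerivWithinAt_nonneg (convex_Ici _)
      (fun t _ => (hd2 t).continuousAt.continuousWithinAt)
      (fun t _ => (hd2 t).hasDerivWithinAt)
    intro t ht
    have ht : v ^ 6 ≤ t := interior_subset ht
    have : 0 ≤ t ^ 2 - L := by
      rw [hvL]
      have := pow_le_pow_left₀ (by positivity) ht 2
      have e : (v ^ 6) ^ 2 = v ^ 12 := by ring
      linarith
    positivity
  have hlim2 : Tendsto (fun t => f t ^ 2) atTop (nhds 0) := by simpa using hlim.pow 2
  have hneg : ∀ t, v ^ 6 ≤ t → 2 * (f t * g t) ≤ 0 := by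
    intro t ht
    by_contra! hc
    have hge : ∀ s, t ≤ s → 2 * (f t * g t) * (s - t) ≤ f s ^ 2 - f t ^ 2 := by
      intro s hs
      apply (convex_Icc t s).mul_sub_le_image_sub_of_le_deriv
        (fun u _ => (hd1 u).continuousAt.continuousWithinAt)
        (fun u _ => (hd1 u).differentiableAt.differentiableWithinAt)
        _ t (left_mem_Icc.2 hs) s (right_mem_Icc.2 hs) hs
      intro u hu
      have hu := interior_subset hu
      rw [(hd1 u).deriv]
      exact hmono (mem_Ici.2 ht) (mem_Ici.2 (ht.trans hu.1)) hu.1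
    have h1 := hlim2.eventually (gt_mem_nhds hc)
    obtain ⟨s, hs1, hs2⟩ := (h1.and (eventually_ge_atTop (t + 1))).exists
    have := hge s (by linarith)
    nlinarith [sq_nonneg (f t)]
  have hanti : AntitoneOn (fun t => f t ^ 2) (Ici (v ^ 6)) := by
    apply antitoneOn_of_hasDerivWithinAt_nonpos (convex_Ici _)
      (fun t _ => (hd1 t).continuousAt.continuousWithinAt)
      (fun t _ => (hd1 t).hasDerivWithinAt)
    intro t ht
    exact hneg t (interior_subset ht)
  have hfin : f x ^ 2 ≤ f (v ^ 6) ^ 2 := hanti (mem_Ici.2 le_rfl) (mem_Ici.2 h') h'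
  exact (sq_le_sq.1 hfin).trans (hB _ hx1v le_rfl)

end ode

/-- Uniform supremum bound for oscillator wave functions. -/
theorem osc_uniform_bound :
    ∃ c : ℝ, 0 < c ∧ ∀ N : ℕ, 1 ≤ N → ∀ y : ℝ,
      |osc N y| ≤ c * (N : ℝ) ^ (-(1 : ℝ) / 12) := by
  refine ⟨10, by norm_num, ?_⟩
  intro N hN y
  obtain ⟨n, rfl⟩ : ∃ n, N = n + 1 := ⟨N - 1, by omega⟩
  have hN1 : (1 : ℝ) ≤ ((n + 1 : ℕ) : ℝ) := by exact_mod_cast hN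
  have key : ∀ x : ℝ, 0 ≤ x → |osc (n + 1) x| ≤ 10 / (2 * ((n + 1 : ℕ) : ℝ) + 1) ^ ((1 : ℝ) / 12) := by
    intro x hx
    refine full (L := 2 * ((n + 1 : ℕ) : ℝ) + 1) (osc_hasDerivAt (n + 1)) (oscD_hasDerivAt (n + 1))
      ?_ ?_ (G0_bound n) (osc_tendsto _) hx
    · exact Real.one_le_rpow (by linarith) (by norm_num)
    · rw [← Real.rpow_natCast, ← Real.rpow_mul (by positivity)]
      norm_num
  have key2 : |osc (n + 1) y| ≤ 10 / (2 * ((n + 1 : ℕ) : ℝ) + 1) ^ ((1 : ℝ) / 12) := by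
    rcases le_total 0 y with h | h
    · exact key y h
    · rw [← osc_neg]; exact key (-y) (by linarith)
  refine key2.trans ?_
  rw [neg_div, Real.rpow_neg (by positivity), ← div_eq_mul_inv]
  have : ((n + 1 : ℕ) : ℝ) ^ ((1 : ℝ) / 12) ≤ (2 * ((n + 1 : ℕ) : ℝ) + 1) ^ ((1 : ℝ) / 12) :=
    Real.rpow_le_rpow (by positivity) (by linarith) (by norm_num)
  gcongr
end

section
/- Global kernel bound: there exists a constant c > 0 such that for every integer N ≥ 1 and all real x, y, |L^N(x,y)| ≤ c · N^{1/3}. -/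
open Real MeasureTheory Filter Set

/-- Iterated derivatives of the Gaussian. -/
noncomputable def gd (n : ℕ) (x : ℝ) : ℝ := iteratedDeriv n (fun t : ℝ => Real.exp (-t ^ 2)) x

lemma gd_contDiff : ContDiff ℝ (⊤ : ℕ∞) (fun t : ℝ => Real.exp (-t ^ 2)) := by
  fun_prop

lemma gd_hasDerivAt (n : ℕ) (x : ℝ) : HasDerivAt (gd n) (gd (n + 1) x) x := by
  have hd : Differentiable ℝ (gd n) :=
    gd_contDiff.differentiable_iteratedDeriv n (by exact_mod_cast WithTop.coe_lt_top n)
  have h := (hd x).hasDerivAt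
  have e : gd (n + 1) x = deriv (gd n) x := by
    unfold gd
    rw [iteratedDeriv_succ]
  rw [e]
  exact h

lemma gd_zero (x : ℝ) : gd 0 x = Real.exp (-x ^ 2) := by simp [gd]

lemma gd_one (x : ℝ) : gd 1 x = -2 * x * gd 0 x := by
  have h := gd_hasDerivAt 0 x
  have h2 : HasDerivAt (gd 0) (-2 * x * gd 0 x) x := by
    have : gd 0 = fun x => Real.exp (-x ^ 2) := funext gd_zero
    rw [this]
    have h4 : HasDerivAt (fun x : ℝ => -x ^ 2) (-(2 * x)) x := by
      have := (hasDerivAt_pow 2 x).neg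
      exact this.congr_deriv (by norm_num)
    exact h4.exp.congr_deriv (by ring)
  exact h.unique h2

lemma gd_rec (n : ℕ) : ∀ x : ℝ,
    gd (n + 2) x = -2 * x * gd (n + 1) x - 2 * ((n : ℝ) + 1) * gd n x := by
  induction n with
  | zero =>
    intro x
    have h := gd_hasDerivAt 1 x
    have h2 : HasDerivAt (gd 1) (-2 * 1 * gd 0 x + -2 * x * gd 1 x) x := by
      have h3 : HasDerivAt (fun x => -2 * x * gd 0 x) (-2 * 1 * gd 0 x + -2 * x * gd 1 x) x :=
        ((hasDerivAt_id x).const_mul (-2)).mul (gd_hasDerivAt 0 x)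
      exact h3.congr_of_eventuallyEq (Filter.Eventually.of_forall gd_one)
    have := h.unique h2
    norm_num at this ⊢
    rw [this]; ring
  | succ n ih =>
    intro x
    have h := gd_hasDerivAt (n + 2) x
    have h2 : HasDerivAt (gd (n + 2)) ((-2 * 1 * gd (n + 1) x + -2 * x * gd (n + 2) x)
        - 2 * ((n : ℝ) + 1) * gd (n + 1) x) x := by
      have h3 : HasDerivAt (fun x => -2 * x * gd (n + 1) x - 2 * ((n : ℝ) + 1) * gd n x)
          ((-2 * 1 * gd (n + 1) x + -2 * x * gd (n + 2) x)
            - 2 * ((n : ℝ) + 1) * gd (n + 1) x) x :=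
        (((hasDerivAt_id x).const_mul (-2)).mul (gd_hasDerivAt (n + 1) x)).sub
        ((gd_hasDerivAt n x).const_mul _)
      exact h3.congr_of_eventuallyEq (Filter.Eventually.of_forall ih)
    have := h.unique h2
    rw [show n + 1 + 2 = n + 2 + 1 from rfl, this]
    push_cast
    ring

/-- Normalisation constant. -/
noncomputable def na (n : ℕ) : ℝ := (Real.sqrt Real.pi * 2 ^ n * (n.factorial : ℝ))⁻¹

lemma na_pos (n : ℕ) : 0 < na n := by
  unfold na
  have := Real.sqrt_pos.2 Real.pi_pos
  positivity

lemma na_succ (n : ℕ) : na n = 2 * ((n : ℝ) + 1) * na (n + 1) := by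
  unfold na
  have := Real.sqrt_pos.2 Real.pi_pos
  have h2 : (n.factorial : ℝ) ≠ 0 := by positivity
  have h3 : (n : ℝ) + 1 ≠ 0 := by positivity
  rw [Nat.factorial_succ]
  push_cast
  field_simp
  try ring

/-- Square of the oscillator function. -/
noncomputable def pq (n : ℕ) (x : ℝ) : ℝ := na n * (Real.exp (x ^ 2) * (gd n x * gd n x))

lemma osc_sq (n : ℕ) (x : ℝ) : osc n x * osc n x = pq n x := by
  have hs : (Real.sqrt (Real.sqrt Real.pi * 2 ^ n * (n.factorial : ℝ)))⁻¹ *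
      (Real.sqrt (Real.sqrt Real.pi * 2 ^ n * (n.factorial : ℝ)))⁻¹ = na n := by
    rw [← mul_inv, Real.mul_self_sqrt (by positivity), na]
  have he : Real.exp (-x ^ 2 / 2) * Real.exp (-x ^ 2 / 2) * (Real.exp (x ^ 2)) = 1 := by
    rw [← Real.exp_add, ← Real.exp_add]
    ring_nf
    simp
  have h1 : ((-1 : ℝ) ^ n) * (-1) ^ n = 1 := by rw [← mul_pow]; simp
  have hh : Real.exp (-x ^ 2 / 2) * Real.exp (-x ^ 2 / 2) * (Real.exp (x ^ 2)) *
      (((-1 : ℝ) ^ n) * (-1) ^ n) = 1 := by rw [he, h1, one_mul]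
  unfold osc hermiteP pq
  change _ * _ * (_ * _ * gd n x) * (_ * _ * (_ * _ * gd n x)) = _
  rw [← hs]
  linear_combination ((Real.sqrt (Real.sqrt Real.pi * 2 ^ n * (n.factorial : ℝ)))⁻¹ *
      (Real.sqrt (Real.sqrt Real.pi * 2 ^ n * (n.factorial : ℝ)))⁻¹ * Real.exp (x ^ 2) *
      gd n x * gd n x) * hh

lemma pq_nonneg (n : ℕ) (x : ℝ) : 0 ≤ pq n x := by
  rw [← osc_sq]; exact mul_self_nonneg _

lemma pq_deriv (n : ℕ) (x : ℝ) : HasDerivAt (pq n)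
    (na n * Real.exp (x ^ 2) * (2 * x * gd n x ^ 2 + 2 * gd n x * gd (n + 1) x)) x := by
  have h1 : HasDerivAt (fun x : ℝ => Real.exp (x ^ 2)) (Real.exp (x ^ 2) * (2 * x)) x := by
    have := (hasDerivAt_pow 2 x).exp
    simpa using this
  have h2 := ((h1.mul ((gd_hasDerivAt n x).mul (gd_hasDerivAt n x))).const_mul (na n))
  refine HasDerivAt.congr_deriv (f := pq n) h2 ?_
  simp only [Pi.mul_apply]
  ring

/-- The sum of squares. -/
noncomputable def sK (n : ℕ) (x : ℝ) : ℝ := ∑ k ∈ Finset.range n, pq k x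

lemma G_deriv (n : ℕ) (x : ℝ) :
    HasDerivAt (fun x => sK n x + sK (n + 1) x) (-2 * x * pq n x) x := by
  induction n with
  | zero =>
    have h := pq_deriv 0 x
    have e : (fun x => sK 0 x + sK (0 + 1) x) = pq 0 := by
      funext y; simp [sK]
    rw [e]
    refine h.congr_deriv ?_
    rw [zero_add, gd_one, pq]
    ring
  | succ n ih =>
    have h := (ih.add (pq_deriv n x)).add (pq_deriv (n + 1) x)
    have e : (fun x => sK (n + 1) x + sK (n + 1 + 1) x)
        = (fun x => sK n x + sK (n + 1) x) + pq n + pq (n + 1) := by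
      funext y
      simp only [sK, Finset.sum_range_succ, Pi.add_apply]
      ring
    rw [e]
    refine h.congr_deriv ?_
    rw [show n + 1 + 1 = n + 2 from rfl, gd_rec, pq, pq, na_succ n]
    ring

lemma sK_mono (n : ℕ) (x : ℝ) : sK n x ≤ sK (n + 1) x := by
  simp only [sK, Finset.sum_range_succ]
  linarith [pq_nonneg n x]

lemma G_le (n : ℕ) (x : ℝ) : sK n x + sK (n + 1) x ≤ sK n 0 + sK (n + 1) 0 := by
  have hd : Differentiable ℝ (fun x => sK n x + sK (n + 1) x) :=
    fun y => (G_deriv n y).differentiableAt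
  rcases le_total 0 x with hx | hx
  · have := antitoneOn_of_deriv_nonpos (convex_Ici (0 : ℝ)) hd.continuous.continuousOn
      hd.differentiableOn (fun y hy => by
        rw [(G_deriv n y).deriv]
        rw [interior_Ici] at hy
        have : 0 ≤ y * pq n y := mul_nonneg (le_of_lt hy) (pq_nonneg n y)
        linarith)
    exact this (by simp) hx hx
  · have := monotoneOn_of_deriv_nonneg (convex_Iic (0 : ℝ)) hd.continuous.continuousOn
      hd.differentiableOn (fun y hy => by
        rw [(G_deriv n y).deriv]
        rw [interior_Iic] at hy
        have : 0 ≤ (-y) * pq n y := mul_nonneg (by simpa using (le_of_lt hy)) (pq_nonneg n y)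
        linarith)
    exact this hx (by simp) hx

lemma pq_zero_rec (n : ℕ) : ((n : ℝ) + 2) * pq (n + 2) 0 = ((n : ℝ) + 1) * pq n 0 := by
  unfold pq
  rw [gd_rec, na_succ n, na_succ (n + 1)]
  push_cast
  ring

lemma pq_zero_bound (n : ℕ) : pq n 0 ^ 2 * ((n : ℝ) + 1) ≤ 1 := by
  induction n using Nat.strong_induction_on with
  | _ n ih =>
    match n with
    | 0 =>
      have : pq 0 0 = (Real.sqrt Real.pi)⁻¹ := by simp [pq, gd_zero, na]
      rw [this, inv_pow, Real.sq_sqrt Real.pi_pos.le]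
      have := inv_le_one_of_one_le₀ (by linarith [Real.pi_gt_three] : (1 : ℝ) ≤ Real.pi)
      simpa using this
    | 1 =>
      have : pq 1 0 = 0 := by simp [pq, gd_one]
      rw [this]; norm_num
    | n + 2 =>
      have h := ih n (by omega)
      have hr := pq_zero_rec n
      have hn : (0 : ℝ) ≤ n := by positivity
      set a := pq n 0
      set b := pq (n + 2) 0
      push_cast
      have h1 : ((n : ℝ) + 2) ^ 2 * (b ^ 2 * (n + 3)) ≤ ((n : ℝ) + 2) ^ 2 * 1 := by
        calc ((n : ℝ) + 2) ^ 2 * (b ^ 2 * (n + 3)) = (((n : ℝ) + 2) * b) ^ 2 * (n + 3) := by ring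
          _ = (a ^ 2 * (n + 1)) * ((n + 1) * (n + 3)) := by rw [hr]; ring
          _ ≤ 1 * ((n + 1) * (n + 3)) := by gcongr
          _ ≤ _ := by nlinarith
      have h2 := le_of_mul_le_mul_left h1 (by positivity)
      linarith

lemma sK_zero_bound (n : ℕ) : sK n 0 ≤ 2 * Real.sqrt n := by
  induction n with
  | zero => simp [sK]
  | succ n ih =>
    have e : sK (n + 1) 0 = sK n 0 + pq n 0 := by simp [sK, Finset.sum_range_succ]
    have h := pq_zero_bound n
    have hp := pq_nonneg n 0
    have hs : Real.sqrt n ^ 2 = n := Real.sq_sqrt (by positivity)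
    have ht : Real.sqrt ((n : ℝ) + 1) ^ 2 = n + 1 := Real.sq_sqrt (by positivity)
    have ht0 : 0 < Real.sqrt ((n : ℝ) + 1) := Real.sqrt_pos.2 (by positivity)
    rw [e]
    push_cast
    set s := Real.sqrt n
    set t := Real.sqrt ((n : ℝ) + 1)
    set p := pq n 0
    have h1 : p * t ≤ 1 := by
      rw [← ht] at h
      have : (p * t) ^ 2 ≤ 1 := by nlinarith
      nlinarith [mul_nonneg hp ht0.le]
    have h2 : p ≤ 2 * (t - s) := by
      have : t * p ≤ t * (2 * (t - s)) := by nlinarith [sq_nonneg (t - s)]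
      exact le_of_mul_le_mul_left this ht0
    linarith

lemma sK_bound (n : ℕ) (hn : 1 ≤ n) (x : ℝ) : sK n x ≤ 4 * Real.sqrt n := by
  have h1 := G_le n x
  have h2 := sK_mono n x
  have h3 := sK_mono n 0
  have h4 := sK_zero_bound (n + 1)
  have h5 : Real.sqrt ((n + 1 : ℕ) : ℝ) ≤ 2 * Real.sqrt n := by
    rw [Real.sqrt_le_left (by positivity), mul_pow, Real.sq_sqrt (by positivity)]
    have : (1 : ℝ) ≤ n := by exact_mod_cast hn
    push_cast
    linarith
  linarith

lemma kerK_bound (n : ℕ) (hn : 1 ≤ n) (x y : ℝ) : |kerK n x y| ≤ 4 * Real.sqrt n := by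
  have h : |kerK n x y| ≤ (sK n x + sK n y) / 2 := by
    unfold kerK sK
    refine (Finset.abs_sum_le_sum_abs _ _).trans ?_
    rw [← Finset.sum_add_distrib, Finset.sum_div]
    refine Finset.sum_le_sum fun k _ => ?_
    rw [← osc_sq, ← osc_sq, abs_le]
    constructor
    · nlinarith [sq_nonneg (osc k x + osc k y)]
    · nlinarith [sq_nonneg (osc k x - osc k y)]
  linarith [sK_bound n hn x, sK_bound n hn y]

/-- Global kernel bound. -/
theorem kernel_global_bound :
    ∃ c : ℝ, 0 < c ∧ ∀ N : ℕ, 1 ≤ N → ∀ x y : ℝ,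
      |kerL N x y| ≤ c * (N : ℝ) ^ ((1 : ℝ) / 3) := by
  refine ⟨4, by norm_num, fun N hN x y => ?_⟩
  have hN' : (1 : ℝ) ≤ N := by exact_mod_cast hN
  have hs : 0 < Real.sqrt N := Real.sqrt_pos.2 (by linarith)
  have h1 : (1 : ℝ) ≤ (N : ℝ) ^ ((1 : ℝ) / 3) := Real.one_le_rpow hN' (by norm_num)
  have h2 : |kerL N x y| ≤ 4 := by
    unfold kerL
    rw [abs_mul, abs_of_pos (inv_pos.2 hs), inv_mul_le_iff₀ hs]
    linarith [kerK_bound N hN (Real.sqrt N * x) (Real.sqrt N * y)]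
  linarith
end

section
/- Principal value of the Stieltjes transform of the semicircle law: for every θ with −√2 < θ < √2, the principal value integral P.V. ∫_{−√2}^{√2} (1/(θ − y)) · (1/π) √(2 − y²) dy, i.e. the limit as δ ↓ 0 of ∫ over {y ∈ [−√2, √2] : |y − θ| ≥ δ} of (√(2 − y²))/(π(θ − y)) dy, exists and equals θ. -/
open Real MeasureTheory Filter Set

/-- Regular part of the antiderivative of `√(2-y²)/(θ-y)`. -/
noncomputable def scG (θ y : ℝ) : ℝ :=
  θ * Real.arcsin (y / Real.sqrt 2) - Real.sqrt (2 - y ^ 2)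
    + Real.sqrt (2 - θ ^ 2) *
      Real.log (2 - θ * y + Real.sqrt (2 - θ ^ 2) * Real.sqrt (2 - y ^ 2))

/-- Antiderivative of `√(2-y²)/(θ-y)`. -/
noncomputable def scF (θ y : ℝ) : ℝ :=
  scG θ y - Real.sqrt (2 - θ ^ 2) * Real.log (θ - y)

lemma sc_pos {θ y : ℝ} (h1 : -Real.sqrt 2 < θ) (h2 : θ < Real.sqrt 2)
    (hy : y ∈ Set.Icc (-Real.sqrt 2) (Real.sqrt 2)) :
    0 < 2 - θ * y + Real.sqrt (2 - θ ^ 2) * Real.sqrt (2 - y ^ 2) := by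
  have ha : Real.sqrt 2 ^ 2 = 2 := Real.sq_sqrt (by norm_num)
  have ha0 : 0 < Real.sqrt 2 := by positivity
  have : 0 ≤ Real.sqrt (2 - θ ^ 2) * Real.sqrt (2 - y ^ 2) := by positivity
  have h3 : θ * y < 2 := by
    have hθ : |θ| < Real.sqrt 2 := abs_lt.2 ⟨h1, h2⟩
    have hy' : |y| ≤ Real.sqrt 2 := abs_le.2 hy
    calc θ * y ≤ |θ * y| := le_abs_self _
      _ = |θ| * |y| := abs_mul _ _
      _ ≤ |θ| * Real.sqrt 2 := by gcongr
      _ < Real.sqrt 2 * Real.sqrt 2 := by gcongr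
      _ = 2 := by nlinarith
  linarith

lemma scG_cont {θ : ℝ} (h1 : -Real.sqrt 2 < θ) (h2 : θ < Real.sqrt 2) :
    ContinuousOn (scG θ) (Set.Icc (-Real.sqrt 2) (Real.sqrt 2)) := by
  unfold scG
  refine ContinuousOn.add ?_ (ContinuousOn.mul continuousOn_const (ContinuousOn.log ?_ ?_))
  · exact Continuous.continuousOn (by
      have := Real.continuous_arcsin
      fun_prop)
  · fun_prop
  · intro y hy
    exact (sc_pos h1 h2 hy).ne'

lemma scF_deriv {θ y : ℝ} (h1 : -Real.sqrt 2 < θ) (h2 : θ < Real.sqrt 2)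
    (hy : y ∈ Set.Ioo (-Real.sqrt 2) (Real.sqrt 2)) (hne : θ - y ≠ 0) :
    HasDerivAt (scF θ) (Real.sqrt (2 - y ^ 2) / (θ - y)) y := by
  have ha : Real.sqrt 2 ^ 2 = 2 := Real.sq_sqrt (by norm_num)
  have ha0 : 0 < Real.sqrt 2 := by positivity
  have hp := sc_pos h1 h2 (Set.Ioo_subset_Icc_self hy)
  have hy2 : 0 < 2 - y ^ 2 := by nlinarith [hy.1, hy.2]
  have ht2 : 0 < 2 - θ ^ 2 := by nlinarith
  have hr0 : 0 < Real.sqrt (2 - y ^ 2) := Real.sqrt_pos.2 hy2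
  have hr : Real.sqrt (2 - y ^ 2) ^ 2 = 2 - y ^ 2 := Real.sq_sqrt hy2.le
  have hs : Real.sqrt (2 - θ ^ 2) ^ 2 = 2 - θ ^ 2 := Real.sq_sqrt ht2.le
  have dsq : HasDerivAt (fun y : ℝ => Real.sqrt (2 - y ^ 2)) (-y / Real.sqrt (2 - y ^ 2)) y := by
    have : HasDerivAt (fun y : ℝ => 2 - y ^ 2) (-(2 * y)) y := by
      simpa using (hasDerivAt_pow 2 y).const_sub 2
    convert this.sqrt hy2.ne' using 1
    field_simp
  have das : HasDerivAt (fun y : ℝ => Real.arcsin (y / Real.sqrt 2))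
      (1 / Real.sqrt (2 - y ^ 2)) y := by
    have e1 : y / Real.sqrt 2 ≠ -1 := by
      intro h; rw [div_eq_iff ha0.ne'] at h; linarith [hy.1]
    have e2 : y / Real.sqrt 2 ≠ 1 := by
      intro h; rw [div_eq_iff ha0.ne'] at h; linarith [hy.2]
    have := (Real.hasDerivAt_arcsin e1 e2).comp y ((hasDerivAt_id y).div_const (Real.sqrt 2))
    refine this.congr_deriv ?_
    have : 1 - (y / Real.sqrt 2) ^ 2 = (2 - y ^ 2) / 2 := by
      rw [div_pow, ha]; ring
    rw [this, Real.sqrt_div hy2.le]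
    field_simp
  have dlog1 : HasDerivAt (fun y : ℝ => Real.log
      (2 - θ * y + Real.sqrt (2 - θ ^ 2) * Real.sqrt (2 - y ^ 2)))
      ((-θ + Real.sqrt (2 - θ ^ 2) * (-y / Real.sqrt (2 - y ^ 2))) /
      (2 - θ * y + Real.sqrt (2 - θ ^ 2) * Real.sqrt (2 - y ^ 2))) y := by
    refine HasDerivAt.log (HasDerivAt.add ?_ (dsq.const_mul _)) hp.ne'
    simpa using ((hasDerivAt_id y).const_mul θ).const_sub 2
  have dlog2 : HasDerivAt (fun y : ℝ => Real.log (θ - y)) (-1 / (θ - y)) y := by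
    refine HasDerivAt.log ?_ hne
    simpa using (hasDerivAt_id y).const_sub θ
  have := (((das.const_mul θ).sub dsq).add (dlog1.const_mul (Real.sqrt (2 - θ ^ 2)))).sub
    (dlog2.const_mul (Real.sqrt (2 - θ ^ 2)))
  refine this.congr_deriv ?_
  generalize Real.sqrt (2 - y ^ 2) = r at *
  generalize Real.sqrt (2 - θ ^ 2) = s at *
  have key : (-θ + s * (-y / r)) / (2 - θ * y + s * r) = s / (r * (θ - y)) - 1 / (θ - y) := by
    rw [div_eq_iff hp.ne']
    field_simp
    linear_combination (-r) * hs + s * hr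
  rw [key]
  field_simp
  linear_combination hs - hr

lemma scF_int {θ u v : ℝ} (h1 : -Real.sqrt 2 < θ) (h2 : θ < Real.sqrt 2)
    (huv : u ≤ v) (hu : -Real.sqrt 2 ≤ u) (hv : v ≤ Real.sqrt 2)
    (hne : ∀ y ∈ Set.Icc u v, θ - y ≠ 0) :
    IntegrableOn (fun y => Real.sqrt (2 - y ^ 2) / (Real.pi * (θ - y))) (Set.Icc u v) ∧
    ∫ y in Set.Icc u v, Real.sqrt (2 - y ^ 2) / (Real.pi * (θ - y))
      = Real.pi⁻¹ * (scF θ v - scF θ u) := by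
  have hc : ContinuousOn (fun y => Real.sqrt (2 - y ^ 2) / (θ - y)) (Set.Icc u v) :=
    ContinuousOn.div (by fun_prop) (by fun_prop) hne
  have e : (fun y => Real.sqrt (2 - y ^ 2) / (Real.pi * (θ - y)))
      = fun y => Real.pi⁻¹ * (Real.sqrt (2 - y ^ 2) / (θ - y)) := by
    funext y
    rw [mul_comm Real.pi, ← div_div, div_eq_inv_mul _ Real.pi]
  rw [e]
  refine ⟨(continuousOn_const.mul hc).integrableOn_Icc, ?_⟩
  rw [integral_const_mul, integral_Icc_eq_integral_Ioc, ← intervalIntegral.integral_of_le huv]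
  congr 1
  apply intervalIntegral.integral_eq_sub_of_hasDerivAt_of_le huv
  · unfold scF
    refine ((scG_cont h1 h2).mono (Set.Icc_subset_Icc hu hv)).sub
      (continuousOn_const.mul (ContinuousOn.log (by fun_prop) hne))
  · intro y hy
    exact scF_deriv h1 h2 ⟨hu.trans_lt hy.1, hy.2.trans_le hv⟩ (hne y (Set.Ioo_subset_Icc_self hy))
  · exact ContinuousOn.intervalIntegrable_of_Icc huv hc

lemma scF_ends {θ : ℝ} (h1 : -Real.sqrt 2 < θ) (h2 : θ < Real.sqrt 2) :
    scF θ (Real.sqrt 2) - scF θ (-Real.sqrt 2) = Real.pi * θ := by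
  have ha : Real.sqrt 2 ^ 2 = 2 := Real.sq_sqrt (by norm_num)
  have ha0 : 0 < Real.sqrt 2 := by positivity
  have e1 : 2 - θ * Real.sqrt 2 = Real.sqrt 2 * (Real.sqrt 2 - θ) := by linear_combination -ha
  have e2 : 2 - θ * -Real.sqrt 2 = Real.sqrt 2 * (Real.sqrt 2 + θ) := by linear_combination -ha
  have e3 : Real.log (θ - Real.sqrt 2) = Real.log (Real.sqrt 2 - θ) := by
    rw [← Real.log_neg_eq_log]; congr 1; ring
  have e4 : θ - -Real.sqrt 2 = Real.sqrt 2 + θ := by ring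
  unfold scF scG
  rw [neg_sq, ha, sub_self, Real.sqrt_zero, mul_zero, add_zero, add_zero, e1, e2, e3, e4,
    Real.log_mul ha0.ne' (by linarith), Real.log_mul ha0.ne' (by linarith), neg_div,
    div_self ha0.ne', Real.arcsin_neg, Real.arcsin_one]
  ring

/-- Principal value of the Stieltjes transform of the semicircle law:
`P.V. ∫_{-√2}^{√2} (1/(θ-y)) (1/π)√(2-y²) dy = θ`. -/
theorem semicircle_principal_value (θ : ℝ)
    (hθ1 : -Real.sqrt 2 < θ) (hθ2 : θ < Real.sqrt 2) :
    Filter.Tendsto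
      (fun δ : ℝ =>
        ∫ y in {y : ℝ | y ∈ Set.Icc (-Real.sqrt 2) (Real.sqrt 2) ∧ δ ≤ |y - θ|},
          Real.sqrt (2 - y ^ 2) / (Real.pi * (θ - y)))
      (nhdsWithin 0 (Set.Ioi 0)) (nhds θ) := by
  have hG : ContinuousAt (scG θ) θ :=
    (scG_cont hθ1 hθ2).continuousAt (Icc_mem_nhds hθ1 hθ2)
  have hlim : Filter.Tendsto
      (fun δ : ℝ => θ + Real.pi⁻¹ * (scG θ (θ - δ) - scG θ (θ + δ)))
      (nhdsWithin 0 (Set.Ioi 0)) (nhds θ) := by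
    have t1 : Filter.Tendsto (fun δ : ℝ => θ - δ) (nhds 0) (nhds θ) := by
      have : Continuous (fun δ : ℝ => θ - δ) := by fun_prop
      simpa using this.tendsto 0
    have t2 : Filter.Tendsto (fun δ : ℝ => θ + δ) (nhds 0) (nhds θ) := by
      have : Continuous (fun δ : ℝ => θ + δ) := by fun_prop
      simpa using this.tendsto 0
    have := (((hG.tendsto.comp t1).sub (hG.tendsto.comp t2)).const_mul Real.pi⁻¹).const_add θ
    simp only [sub_self, mul_zero, add_zero] at this
    exact this.mono_left nhdsWithin_le_nhds
  refine hlim.congr' ?_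
  have hm : 0 < min (θ + Real.sqrt 2) (Real.sqrt 2 - θ) := lt_min (by linarith) (by linarith)
  filter_upwards [Ioo_mem_nhdsGT hm] with δ hδ
  have hδ0 : 0 < δ := hδ.1
  have hδ1 : δ < θ + Real.sqrt 2 := hδ.2.trans_le (min_le_left _ _)
  have hδ2 : δ < Real.sqrt 2 - θ := hδ.2.trans_le (min_le_right _ _)
  have hset : {y : ℝ | y ∈ Set.Icc (-Real.sqrt 2) (Real.sqrt 2) ∧ δ ≤ |y - θ|}
      = Set.Icc (-Real.sqrt 2) (θ - δ) ∪ Set.Icc (θ + δ) (Real.sqrt 2) := by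
    ext y
    simp only [Set.mem_ofPred_eq, Set.mem_Icc, Set.mem_union, le_abs]
    constructor
    · rintro ⟨⟨h1, h2⟩, h | h⟩
      · right; constructor <;> linarith
      · left; constructor <;> linarith
    · rintro (⟨h1, h2⟩ | ⟨h1, h2⟩)
      · exact ⟨⟨h1, by linarith⟩, Or.inr (by linarith)⟩
      · exact ⟨⟨by linarith, h2⟩, Or.inl (by linarith)⟩
  have hdisj : Disjoint (Set.Icc (-Real.sqrt 2) (θ - δ)) (Set.Icc (θ + δ) (Real.sqrt 2)) := by
    rw [Set.disjoint_left]
    intro y h1 h2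
    linarith [h1.2, h2.1]
  obtain ⟨i1, I1⟩ := scF_int (u := -Real.sqrt 2) (v := θ - δ) hθ1 hθ2 (by linarith) le_rfl
    (by linarith) (fun y hy h => by linarith [hy.2])
  obtain ⟨i2, I2⟩ := scF_int (u := θ + δ) (v := Real.sqrt 2) hθ1 hθ2 (by linarith) (by linarith)
    le_rfl (fun y hy h => by linarith [hy.1])
  rw [hset, setIntegral_union hdisj measurableSet_Icc i1 i2, I1, I2]
  have he := scF_ends hθ1 hθ2
  have f1 : scF θ (θ - δ) = scG θ (θ - δ) - Real.sqrt (2 - θ ^ 2) * Real.log δ := by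
    unfold scF; rw [sub_sub_cancel]
  have f2 : scF θ (θ + δ) = scG θ (θ + δ) - Real.sqrt (2 - θ ^ 2) * Real.log δ := by
    unfold scF; rw [sub_add_cancel_left, Real.log_neg_eq_log]
  rw [f1, f2]
  have hpi : Real.pi⁻¹ * Real.pi = 1 := inv_mul_cancel₀ Real.pi_ne_zero
  linear_combination (-Real.pi⁻¹) * he - θ * hpi
end
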